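/- arXiv:2010.00455 — 3 statements merged into one kernel-verified Lean document; each statement's English description precedes it below -/
import Mathlib

section
/- Let M1 and M2 be finite monoids, let (π1, V1) be an irreducible complex representation of M1, and let (σ, W) be a finite-dimensional complex representation of M1 × M2. Suppose that the intersection of the kernels of all M1-equivariant linear maps W → V1 is zero. Then there exists a complex representation (π2', V2') of M2, unique up to isomorphism, such that W is isomorphic to V1 ⊗_ℂ V2' as a representation of M1 × M2 (with M1 acting on the first factor and M2 on the second). -/
open scoped TensorProduct

universe u

/-!
Since `V₁` is irreducible with scalar endomorphisms, the density theorem makes `k[M₁] → End V₁`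
surjective (Burnside). Let `M₂` act on `H = Hom_{M₁}(V₁, W)` by post-composition; evaluation
`V₁ ⊗ H → W` is `M₁ × M₂`-equivariant. It is injective, because matrix units lifted to `k[M₁]`
extract the coefficients of a tensor, and surjective, because for a linear form `φ` and `w ∈ W`
the map `v ↦ (φ ⊗ v) • w` is a well-defined element of `H` as soon as the maps `W → V₁` separate
points. Conversely, currying `V₁ ⊗ V₂ ≅ W` gives `V₂ → H`, which becomes bijective after tensoring
with `V₁`, hence is bijective: `V₂` is determined by `W`.
-/

open Representation Function
open scoped MonoidAlgebra

universe v w₁ w₂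

section Irreducible

variable {k M V : Type*} [Field k] [Monoid M] [AddCommGroup V] [Module k V]

theorem isIrreducible_of_forall_invariant [Nontrivial V] (π : Representation k M V)
    (h : ∀ p : Submodule k V, (∀ m, ∀ v ∈ p, π m v ∈ p) → p = ⊥ ∨ p = ⊤) :
    π.IsIrreducible where
  exists_pair_ne := ⟨⊥, ⊤, fun h' => bot_ne_top (congrArg Subrepresentation.toSubmodule h')⟩
  eq_bot_or_eq_top p :=
    (h p.toSubmodule fun m _ hv => p.apply_mem_toSubmodule m hv).imp
      (fun hp => Subrepresentation.toSubmodule_injective hp)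
      (fun hp => Subrepresentation.toSubmodule_injective hp)

theorem nontrivial_of_isIrreducible (π : Representation k M V) [π.IsIrreducible] : Nontrivial V :=
  IsSimpleModule.nontrivial k[M] π.asModule

theorem finiteDimensional_of_isIrreducible [Finite M] (π : Representation k M V)
    [π.IsIrreducible] : FiniteDimensional k V :=
  have : Module.Finite k π.asModule := .trans k[M] π.asModule
  this

/-- Burnside's theorem, from the Jacobson density theorem. -/
theorem asAlgebraHom_surjective_of_isIrreducible [FiniteDimensional k V]
    (π : Representation k M V) [π.IsIrreducible]
    (hschur : Surjective (algebraMap k (π.IntertwiningMap π))) :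
    Surjective π.asAlgebraHom := by
  intro T
  have map_endo (g : Module.End k[M] π.asModule) (v : V) : T (g v) = g (T v) := by
    obtain ⟨c, hc⟩ := hschur ((IntertwiningMap.equivLinearMapAsModule π π).symm g)
    have g_eq_smul (u : V) : g u = c • u := congr($hc u).symm
    rw [g_eq_smul, g_eq_smul, map_smul]
  have : Module.Finite (Module.End k[M] π.asModule) π.asModule := .of_restrictScalars_finite k _ _
  let T' : Module.End (Module.End k[M] π.asModule) π.asModule :=
    { toFun := T, map_add' := T.map_add, map_smul' := map_endo }
  obtain ⟨a, ha⟩ := Module.Finite.toModuleEnd_moduleEnd_surjective T'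
  exact ⟨a, LinearMap.ext fun v => congr($ha v)⟩

end Irreducible

section Evaluation

variable {k M V W : Type*} [CommRing k] [Monoid M] [AddCommGroup V] [Module k V]
  [AddCommGroup W] [Module k W] {π : Representation k M V} {τ : Representation k M W}

theorem intertwiningMap_asAlgebraHom_apply (f : π.IntertwiningMap τ) (a : k[M]) (v : V) :
    f (π.asAlgebraHom a v) = τ.asAlgebraHom a (f v) :=
  (IntertwiningMap.equivLinearMapAsModule π τ f).map_smul a v

variable (π τ) in
/-- The evaluation map `v ⊗ f ↦ f v` from `V ⊗ Hom_M(V, W)` to `W`; its bijectivity exhibits `W` as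
a multiple of `V`, with multiplicity space `Hom_M(V, W)`. -/
noncomputable def evalTensor : V ⊗[k] π.IntertwiningMap τ →ₗ[k] W :=
  TensorProduct.lift (IntertwiningMap.toLinearMapl (ρ := π) (σ := τ)).flip

@[simp]
theorem evalTensor_tmul (v : V) (f : π.IntertwiningMap τ) : evalTensor π τ (v ⊗ₜ f) = f v :=
  rfl

theorem evalTensor_injective [Module.Free k V] (hπ : Surjective π.asAlgebraHom) :
    Injective (evalTensor π τ) := by
  rw [injective_iff_map_eq_zero]
  intro t ht
  let b := Module.Free.chooseBasis k V
  obtain ⟨c, rfl⟩ := TensorProduct.eq_repr_basis_left b t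
  suffices c = 0 by simp [this]
  ext i v
  obtain ⟨a, ha⟩ := hπ ((b.coord i).smulRight v)
  calc c i v = c.sum fun j f => f (π.asAlgebraHom a (b j)) := by
        rw [Finsupp.sum_eq_single i (fun j _ hj => by simp [ha, hj]) (fun _ => rfl)]
        simp [ha]
    _ = τ.asAlgebraHom a (evalTensor π τ (c.sum fun j f => b j ⊗ₜ f)) := by
        simp [Finsupp.sum, intertwiningMap_asAlgebraHom_apply]
    _ = 0 := by rw [ht, map_zero]

/-- `τ` is cogenerated by `π` if the intersection of the kernels of all intertwining maps from `τ`
to `π` is zero. -/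
def IsCogeneratedBy (τ : Representation k M W) (π : Representation k M V) : Prop :=
  ∀ w, (∀ f : τ.IntertwiningMap π, f w = 0) → w = 0

theorem IsCogeneratedBy.eq_of_forall_apply_eq (hτ : IsCogeneratedBy τ π) {w w' : W}
    (h : ∀ f : τ.IntertwiningMap π, f w = f w') : w = w' :=
  sub_eq_zero.mp <| hτ _ fun f => by rw [map_sub, h f, sub_self]

/-- The map is `v ↦ (φ ⊗ v) • w`, with the rank-one operator `φ ⊗ v` lifted to `k[M]`. -/
theorem IsCogeneratedBy.exists_intertwiningMap_apply_eq_smul (hτ : IsCogeneratedBy τ π)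
    (hπ : Surjective π.asAlgebraHom) (φ : Module.Dual k V) (w : W) :
    ∃ h : π.IntertwiningMap τ, ∀ (f : τ.IntertwiningMap π) (v : V), f (h v) = φ (f w) • v := by
  choose a ha using fun v : V => hπ (φ.smulRight v)
  have apply_lift (f : τ.IntertwiningMap π) (v : V) :
      f (τ.asAlgebraHom (a v) w) = φ (f w) • v := by
    rw [intertwiningMap_asAlgebraHom_apply, ha, LinearMap.smulRight_apply]
  let h : V →ₗ[k] W :=
    { toFun := fun v => τ.asAlgebraHom (a v) w
      map_add' := fun v v' => hτ.eq_of_forall_apply_eq fun f => by simp [apply_lift]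
      map_smul' := fun c v => hτ.eq_of_forall_apply_eq fun f => by simp [apply_lift, smul_comm c] }
  have h_equivariant (m : M) (v : V) : h (π m v) = τ m (h v) :=
    hτ.eq_of_forall_apply_eq fun f => by
      simp [h, apply_lift, f.isIntertwining]
  exact ⟨h.intertwiningMap_of_isIntertwiningMap π τ h_equivariant, apply_lift⟩

theorem IsCogeneratedBy.evalTensor_surjective [Module.Free k V] [Module.Finite k V]
    (hτ : IsCogeneratedBy τ π) (hπ : Surjective π.asAlgebraHom) :
    Surjective (evalTensor π τ) := by
  intro w
  let b := Module.Free.chooseBasis k V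
  choose h hh using fun i => hτ.exists_intertwiningMap_apply_eq_smul hπ (b.coord i) w
  refine ⟨∑ i, b i ⊗ₜ h i, hτ.eq_of_forall_apply_eq fun f => ?_⟩
  simp only [map_sum, evalTensor_tmul, hh]
  exact b.sum_repr (f w)

end Evaluation

section Multiplicity

variable {k M₁ M₂ V₁ V₂ W : Type*} [CommRing k] [Monoid M₁] [Monoid M₂]
  [AddCommGroup V₁] [Module k V₁] [AddCommGroup V₂] [Module k V₂] [AddCommGroup W] [Module k W]

/-- The external tensor product `π₁ ⊠ π₂`: each monoid acts on its own factor. -/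
noncomputable def extTprod (π₁ : Representation k M₁ V₁) (π₂ : Representation k M₂ V₂) :
    Representation k (M₁ × M₂) (V₁ ⊗[k] V₂) :=
  tprod (π₁.comp (MonoidHom.fst M₁ M₂)) (π₂.comp (MonoidHom.snd M₁ M₂))

@[simp]
theorem extTprod_apply (π₁ : Representation k M₁ V₁) (π₂ : Representation k M₂ V₂) (m : M₁ × M₂) :
    extTprod π₁ π₂ m = TensorProduct.map (π₁ m.1) (π₂ m.2) :=
  rfl

/-- The restriction of a representation of `M₁ × M₂` to `M₁`, embedded as `m ↦ (m, 1)`. -/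
abbrev resFst (σ : Representation k (M₁ × M₂) W) : Representation k M₁ W :=
  σ.comp (MonoidHom.inl M₁ M₂)

/-- The action of an element of `M₂` on a representation of `M₁ × M₂`, as an endomorphism of its
restriction to `M₁`. -/
def sndEndo (σ : Representation k (M₁ × M₂) W) (m : M₂) :
    (resFst σ).IntertwiningMap (resFst σ) where
  toLinearMap := σ (1, m)
  isIntertwining' m₁ := ((MonoidHom.commute_inl_inr m₁ m).map σ).symm

/-- The multiplicity representation of `π₁` in `σ`: the space `Hom_{M₁}(V₁, W)`, on which `M₂` acts
by post-composition. -/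
def multRep (π₁ : Representation k M₁ V₁) (σ : Representation k (M₁ × M₂) W) :
    Representation k M₂ (π₁.IntertwiningMap (resFst σ)) where
  toFun m := IntertwiningMap.llcomp π₁ _ _ (sndEndo σ m)
  map_one' := by
    ext f v
    exact congr($(map_one σ) (f v))
  map_mul' m n := by
    ext f v
    exact congr($(map_mul (σ.comp (MonoidHom.inr M₁ M₂)) m n) (f v))

variable {π₁ : Representation k M₁ V₁} {π₂ : Representation k M₂ V₂}
  {σ : Representation k (M₁ × M₂) W}

theorem multRep_apply_apply (m : M₂) (f : π₁.IntertwiningMap (resFst σ)) (v : V₁) :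
    multRep π₁ σ m f v = σ (1, m) (f v) :=
  rfl

theorem apply_mk_eq (σ : Representation k (M₁ × M₂) W) (m₁ : M₁) (m₂ : M₂) (w : W) :
    σ (m₁, m₂) w = σ (1, m₂) (σ (m₁, 1) w) := by
  simp [← Module.End.mul_apply, ← map_mul]

variable (π₁ σ) in
/-- Evaluation, as an `M₁ × M₂`-equivariant map `V₁ ⊠ Hom_{M₁}(V₁, W) → W`. -/
noncomputable def evalIntertwining : (extTprod π₁ (multRep π₁ σ)).IntertwiningMap σ where
  toLinearMap := evalTensor π₁ (resFst σ)
  isIntertwining' m := by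
    ext v f
    simp [multRep_apply_apply, f.isIntertwining, apply_mk_eq σ m.1 m.2]

/-- The map `V₂ → Hom_{M₁}(V₁, W)` adjoint to `V₁ ⊠ V₂ → W`. -/
noncomputable def curryIntertwining (f : (extTprod π₁ π₂).IntertwiningMap σ) :
    π₂.IntertwiningMap (multRep π₁ σ) where
  toFun x :=
    { toLinearMap := f.toLinearMap ∘ₗ (TensorProduct.mk k V₁ V₂).flip x
      isIntertwining' := fun m => by
        ext v
        simpa using f.isIntertwining _ _ (m, 1) (v ⊗ₜ x) }
  map_add' x y := by ext v; simp
  map_smul' c x := by ext v; simp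
  isIntertwining' m := by
    ext x v
    simpa [multRep_apply_apply] using f.isIntertwining _ _ (1, m) (v ⊗ₜ x)

theorem evalTensor_comp_lTensor_curryIntertwining (f : (extTprod π₁ π₂).IntertwiningMap σ) :
    evalTensor π₁ (resFst σ) ∘ₗ (curryIntertwining f).toLinearMap.lTensor V₁ = f.toLinearMap :=
  TensorProduct.ext' fun _ _ => rfl

theorem curryIntertwining_bijective [Module.Free k V₁] [Nontrivial V₁]
    (hπ₁ : Surjective π₁.asAlgebraHom) (e : (extTprod π₁ π₂).Equiv σ) :
    Bijective (curryIntertwining e.toIntertwiningMap) := by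
  have eval_injective := evalTensor_injective (τ := resFst σ) hπ₁
  have comp_bijective : Bijective (evalTensor π₁ (resFst σ) ∘
      (curryIntertwining e.toIntertwiningMap).toLinearMap.lTensor V₁) := by
    rw [← LinearMap.coe_comp, evalTensor_comp_lTensor_curryIntertwining]
    exact e.toLinearEquiv.bijective
  have eval_bijective : Bijective (evalTensor π₁ (resFst σ)) :=
    ⟨eval_injective, comp_bijective.2.of_comp⟩
  exact (Module.FaithfullyFlat.lTensor_bijective_iff_bijective k V₁ _).mp
    ((Bijective.of_comp_iff' eval_bijective _).mp comp_bijective)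

theorem nonempty_equiv_extTprod_multRep [Module.Free k V₁] [Module.Finite k V₁]
    (hπ₁ : Surjective π₁.asAlgebraHom) (hσ : IsCogeneratedBy (resFst σ) π₁) :
    Nonempty (σ.Equiv (extTprod π₁ (multRep π₁ σ))) :=
  ⟨((evalIntertwining π₁ σ).ofBijective
    ⟨evalTensor_injective hπ₁, hσ.evalTensor_surjective hπ₁⟩).symm⟩

theorem nonempty_equiv_multRep [Module.Free k V₁] [Nontrivial V₁]
    (hπ₁ : Surjective π₁.asAlgebraHom) (e : σ.Equiv (extTprod π₁ π₂)) :
    Nonempty (π₂.Equiv (multRep π₁ σ)) :=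
  ⟨(curryIntertwining e.symm.toIntertwiningMap).ofBijective
    (curryIntertwining_bijective hπ₁ e.symm)⟩

end Multiplicity

theorem stmt1_general {k M1 M2 : Type*} [Field k] [Monoid M1] [Monoid M2]
    {V1 : Type u} [AddCommGroup V1] [Module k V1] [FiniteDimensional k V1]
    {W : Type v} [AddCommGroup W] [Module k W]
    (π1 : Representation k M1 V1) [π1.IsIrreducible]
    (hschur : Surjective (algebraMap k (π1.IntertwiningMap π1)))
    (σ : Representation k (M1 × M2) W)
    (hker : ∀ w : W,
      (∀ f : W →ₗ[k] V1,
        (∀ (m1 : M1) (x : W), f (σ (m1, 1) x) = π1 m1 (f x)) → f w = 0) →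
      w = 0) :
    (∃ (V2' : Type (max u v)) (_ : AddCommGroup V2') (_ : Module k V2')
        (π2' : Representation k M2 V2') (e : W ≃ₗ[k] V1 ⊗[k] V2'),
        ∀ (m1 : M1) (m2 : M2) (w : W),
          e (σ (m1, m2) w) = TensorProduct.map (π1 m1) (π2' m2) (e w)) ∧
    (∀ (V2' : Type w₁) (V2'' : Type w₂) [AddCommGroup V2'] [Module k V2']
        [AddCommGroup V2''] [Module k V2'']
        (π2' : Representation k M2 V2') (π2'' : Representation k M2 V2'')
        (e' : W ≃ₗ[k] V1 ⊗[k] V2') (e'' : W ≃ₗ[k] V1 ⊗[k] V2''),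
        (∀ (m1 : M1) (m2 : M2) (w : W),
          e' (σ (m1, m2) w) = TensorProduct.map (π1 m1) (π2' m2) (e' w)) →
        (∀ (m1 : M1) (m2 : M2) (w : W),
          e'' (σ (m1, m2) w) = TensorProduct.map (π1 m1) (π2'' m2) (e'' w)) →
        ∃ g : V2' ≃ₗ[k] V2'',
          ∀ (m2 : M2) (v : V2'), g (π2' m2 v) = π2'' m2 (g v)) := by
  have hπ1 : Surjective π1.asAlgebraHom := asAlgebraHom_surjective_of_isIrreducible π1 hschur
  have hσ : IsCogeneratedBy (resFst σ) π1 := fun w hw =>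
    hker w fun f hf => hw (f.intertwiningMap_of_isIntertwiningMap _ _ hf)
  have := nontrivial_of_isIrreducible π1
  constructor
  · obtain ⟨e⟩ := nonempty_equiv_extTprod_multRep hπ1 hσ
    exact ⟨_, _, _, multRep π1 σ, e.toLinearEquiv, fun m1 m2 =>
      e.toIntertwiningMap.isIntertwining _ _ (m1, m2)⟩
  · intro V2' V2'' _ _ _ _ π2' π2'' e' e'' he' he''
    obtain ⟨g'⟩ : Nonempty (π2'.Equiv (multRep π1 σ)) :=
      nonempty_equiv_multRep hπ1 (.mk e' fun m => LinearMap.ext (he' m.1 m.2))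
    obtain ⟨g''⟩ : Nonempty (π2''.Equiv (multRep π1 σ)) :=
      nonempty_equiv_multRep hπ1 (.mk e'' fun m => LinearMap.ext (he'' m.1 m.2))
    let g := g'.trans g''.symm
    exact ⟨g.toLinearEquiv, g.toIntertwiningMap.isIntertwining _ _⟩

/-- Waldspurger's second lemma for finite monoids: if `(π₁, V₁)` is an irreducible complex
representation of `M₁` and `(σ, W)` a finite-dimensional representation of `M₁ × M₂` such that
the intersection of the kernels of all `M₁`-equivariant maps `W → V₁` is zero, then
`W ≅ V₁ ⊗ V₂'` as `M₁ × M₂`-representations for some `M₂`-representation `(π₂', V₂')`,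
unique up to isomorphism. -/
theorem stmt1 {M1 M2 : Type*} [Monoid M1] [Monoid M2] [Finite M1] [Finite M2]
    {V1 : Type u} [AddCommGroup V1] [Module ℂ V1]
    {W : Type u} [AddCommGroup W] [Module ℂ W] [FiniteDimensional ℂ W]
    (π1 : Representation ℂ M1 V1)
    (hV1 : Nontrivial V1)
    (hirr : ∀ p : Submodule ℂ V1, (∀ (m : M1), ∀ v ∈ p, π1 m v ∈ p) → p = ⊥ ∨ p = ⊤)
    (σ : Representation ℂ (M1 × M2) W)
    (hker : ∀ w : W,
      (∀ f : W →ₗ[ℂ] V1,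
        (∀ (m1 : M1) (x : W), f (σ (m1, 1) x) = π1 m1 (f x)) → f w = 0) →
      w = 0) :
    (∃ (V2' : Type u) (_ : AddCommGroup V2') (_ : Module ℂ V2')
        (π2' : Representation ℂ M2 V2') (e : W ≃ₗ[ℂ] V1 ⊗[ℂ] V2'),
        ∀ (m1 : M1) (m2 : M2) (w : W),
          e (σ (m1, m2) w) = TensorProduct.map (π1 m1) (π2' m2) (e w)) ∧
    (∀ (V2' V2'' : Type u) [AddCommGroup V2'] [Module ℂ V2']
        [AddCommGroup V2''] [Module ℂ V2'']
        (π2' : Representation ℂ M2 V2') (π2'' : Representation ℂ M2 V2'')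
        (e' : W ≃ₗ[ℂ] V1 ⊗[ℂ] V2') (e'' : W ≃ₗ[ℂ] V1 ⊗[ℂ] V2''),
        (∀ (m1 : M1) (m2 : M2) (w : W),
          e' (σ (m1, m2) w) = TensorProduct.map (π1 m1) (π2' m2) (e' w)) →
        (∀ (m1 : M1) (m2 : M2) (w : W),
          e'' (σ (m1, m2) w) = TensorProduct.map (π1 m1) (π2'' m2) (e'' w)) →
        ∃ g : V2' ≃ₗ[ℂ] V2'',
          ∀ (m2 : M2) (v : V2'), g (π2' m2 v) = π2'' m2 (g v)) := by
  have := isIrreducible_of_forall_invariant π1 hirr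
  have := finiteDimensional_of_isIrreducible π1
  exact stmt1_general π1
    Representation.IsIrreducible.algebraMap_intertwiningMap_bijective_of_isAlgClosed.2 σ hker
end

section
/- Let M be a finite monoid, N a submonoid of M containing the identity, and m1, m2 ∈ M with Nm1N = Nm2N. Then: (a) there exists n ∈ N such that the map x ↦ x*n restricts to a bijection from Nm1 onto Nm2; (b) there exists n' ∈ N such that the map x ↦ n'*x restricts to a bijection from m1N onto m2N; (c) the sets G(m1) = {x ∈ M : Nx = Nm1 and xN = m1N} and G(m2) = {x ∈ M : Nx = Nm2 and xN = m2N} have the same cardinality. -/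
/-!
Writing `m₂ = c * m₁ * d` and `m₁ = a * m₂ * b` gives `m₁ = (a * c) ^ k * m₁ * (d * b) ^ k` for
all `k`. The powers of `a * c` eventually repeat, so some positive power of `a * c` alone fixes `m₁`
from the left, and likewise some positive power of `d * b` fixes it from the right. Hence right
multiplication by `d` can be undone on `N m₁` and left multiplication by `c` on `m₁ N`, and Green's
lemma, relative to `N`, carries `m₁` to `m₁ * d` and then to `c * m₁ * d = m₂`.
-/

open Function MulOpposite Set

section PeriodicElements

variable {M : Type*} [Monoid M] {u v m : M}

theorem pow_mul_mul_pow_eq_self (h : u * m * v = m) (k : ℕ) : u ^ k * m * v ^ k = m := by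
  induction k with
  | zero => simp
  | succ k ih =>
    calc u ^ (k + 1) * m * v ^ (k + 1) = u ^ k * (u * m * v) * v ^ k := by
          simp only [pow_succ u, pow_succ' v, mul_assoc]
      _ = m := by rw [h, ih]

theorem exists_pow_succ_mul_pow_eq_pow (hu : ¬ Injective fun k : ℕ => u ^ k) :
    ∃ k i : ℕ, u ^ (k + 1) * u ^ i = u ^ i := by
  obtain ⟨i, j, hij, hne⟩ := not_injective_iff.mp hu
  wlog hlt : i < j generalizing i j
  · exact this j i hij.symm hne.symm (by omega)
  obtain ⟨k, rfl⟩ := Nat.exists_eq_add_of_lt hlt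
  refine ⟨k, i, ?_⟩
  rw [← pow_add, add_comm, ← add_assoc]
  exact hij.symm

theorem exists_pow_succ_mul_eq_self (hu : ¬ Injective fun k : ℕ => u ^ k) (h : u * m * v = m) :
    ∃ k : ℕ, u ^ (k + 1) * m = m := by
  obtain ⟨k, i, hki⟩ := exists_pow_succ_mul_pow_eq_pow hu
  have hm := pow_mul_mul_pow_eq_self h i
  refine ⟨k, ?_⟩
  calc u ^ (k + 1) * m = u ^ (k + 1) * (u ^ i * m * v ^ i) := by rw [hm]
    _ = u ^ (k + 1) * u ^ i * m * v ^ i := by simp only [mul_assoc]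
    _ = m := by rw [hki, hm]

theorem exists_mul_pow_succ_eq_self (hv : ¬ Injective fun k : ℕ => v ^ k) (h : u * m * v = m) :
    ∃ k : ℕ, m * v ^ (k + 1) = m := by
  have hv_op : ¬ Injective fun k : ℕ => op v ^ k := fun hinj =>
    hv fun _ _ hij => hinj (congrArg op hij)
  have h_op : op v * op m * op u = op m := by
    rw [← op_mul, ← op_mul, ← mul_assoc, h]
  obtain ⟨k, hk⟩ := exists_pow_succ_mul_eq_self hv_op h_op
  exact ⟨k, op_injective hk⟩

end PeriodicElements

section Translates

variable {M : Type*} [Monoid M] (N : Submonoid M)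

/-- The set `Nm`, the principal left ideal of `m` relative to `N`. -/
def leftTranslates (m : M) : Set M := {x | ∃ a ∈ N, x = a * m}

/-- The set `mN`, the principal right ideal of `m` relative to `N`. -/
def rightTranslates (m : M) : Set M := {x | ∃ b ∈ N, x = m * b}

/-- The set `NmN`, the principal two-sided ideal of `m` relative to `N`. -/
def twoSidedTranslates (m : M) : Set M := {x | ∃ a ∈ N, ∃ b ∈ N, x = a * m * b}

/-- The set `G(m)` of all `x` with `Nx = Nm` and `xN = mN`, that is, the class of `m` under
Green's relation `ℋ` relative to `N`. -/
def greenClass (m : M) : Set M :=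
  {x | leftTranslates N x = leftTranslates N m ∧ rightTranslates N x = rightTranslates N m}

theorem mem_leftTranslates_self (m : M) : m ∈ leftTranslates N m :=
  ⟨1, N.one_mem, (one_mul m).symm⟩

theorem mem_rightTranslates_self (m : M) : m ∈ rightTranslates N m :=
  ⟨1, N.one_mem, (mul_one m).symm⟩

theorem mem_twoSidedTranslates_self (m : M) : m ∈ twoSidedTranslates N m :=
  ⟨1, N.one_mem, 1, N.one_mem, by rw [one_mul, mul_one]⟩

theorem image_mul_right_leftTranslates (m d : M) :
    (fun x => x * d) '' leftTranslates N m = leftTranslates N (m * d) := by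
  ext y
  constructor
  · rintro ⟨_, ⟨a, ha, rfl⟩, rfl⟩
    exact ⟨a, ha, mul_assoc a m d⟩
  · rintro ⟨a, ha, rfl⟩
    exact ⟨a * m, ⟨a, ha, rfl⟩, mul_assoc a m d⟩

theorem image_mul_left_rightTranslates (c m : M) :
    (fun x => c * x) '' rightTranslates N m = rightTranslates N (c * m) := by
  ext y
  constructor
  · rintro ⟨_, ⟨b, hb, rfl⟩, rfl⟩
    exact ⟨b, hb, (mul_assoc c m b).symm⟩
  · rintro ⟨b, hb, rfl⟩
    exact ⟨m * b, ⟨b, hb, rfl⟩, (mul_assoc c m b).symm⟩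

variable {N} {a b c d m x : M}

theorem leftTranslates_mul_left_subset (hc : c ∈ N) :
    leftTranslates N (c * m) ⊆ leftTranslates N m := by
  rintro _ ⟨p, hp, rfl⟩
  exact ⟨p * c, N.mul_mem hp hc, (mul_assoc p c m).symm⟩

theorem rightTranslates_mul_right_subset (hd : d ∈ N) :
    rightTranslates N (m * d) ⊆ rightTranslates N m := by
  rintro _ ⟨p, hp, rfl⟩
  exact ⟨d * p, N.mul_mem hd hp, mul_assoc m d p⟩

theorem leftTranslates_mul_left_eq (ha : a ∈ N) (hc : c ∈ N) (h : a * (c * m) = m) :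
    leftTranslates N (c * m) = leftTranslates N m :=
  (leftTranslates_mul_left_subset hc).antisymm <| by
    simpa only [h] using leftTranslates_mul_left_subset (m := c * m) ha

theorem rightTranslates_mul_right_eq (hb : b ∈ N) (hd : d ∈ N) (h : m * d * b = m) :
    rightTranslates N (m * d) = rightTranslates N m :=
  (rightTranslates_mul_right_subset hd).antisymm <| by
    simpa only [h] using rightTranslates_mul_right_subset (m := m * d) hb

theorem mul_mul_eq_self_of_mem_leftTranslates (h : m * d * b = m) (hx : x ∈ leftTranslates N m) :
    x * d * b = x := by
  obtain ⟨p, -, rfl⟩ := hx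
  rw [mul_assoc p, mul_assoc p, h]

theorem mul_mul_eq_self_of_mem_rightTranslates (h : a * (c * m) = m)
    (hx : x ∈ rightTranslates N m) : a * (c * x) = x := by
  obtain ⟨p, -, rfl⟩ := hx
  rw [← mul_assoc c, ← mul_assoc a, h]

theorem bijOn_mul_right_leftTranslates (h : m * d * b = m) :
    BijOn (fun x => x * d) (leftTranslates N m) (leftTranslates N (m * d)) := by
  have hinv : LeftInvOn (fun x => x * b) (fun x => x * d) (leftTranslates N m) :=
    fun _ hx => mul_mul_eq_self_of_mem_leftTranslates h hx
  simpa only [image_mul_right_leftTranslates] using hinv.injOn.bijOn_image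

theorem bijOn_mul_left_rightTranslates (h : a * (c * m) = m) :
    BijOn (fun x => c * x) (rightTranslates N m) (rightTranslates N (c * m)) := by
  have hinv : LeftInvOn (fun x => a * x) (fun x => c * x) (rightTranslates N m) :=
    fun _ hx => mul_mul_eq_self_of_mem_rightTranslates h hx
  simpa only [image_mul_left_rightTranslates] using hinv.injOn.bijOn_image

end Translates

section GreenClass

variable {M : Type*} [Monoid M] {N : Submonoid M} {a b c d m x : M}

theorem mem_leftTranslates_of_mem_greenClass (hx : x ∈ greenClass N m) :
    x ∈ leftTranslates N m :=
  hx.1 ▸ mem_leftTranslates_self N x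

theorem mem_rightTranslates_of_mem_greenClass (hx : x ∈ greenClass N m) :
    x ∈ rightTranslates N m :=
  hx.2 ▸ mem_rightTranslates_self N x

theorem mapsTo_mul_right_greenClass (hb : b ∈ N) (hd : d ∈ N) (h : m * d * b = m) :
    MapsTo (fun x => x * d) (greenClass N m) (greenClass N (m * d)) := by
  intro x hx
  have hxdb : x * d * b = x :=
    mul_mul_eq_self_of_mem_leftTranslates h (mem_leftTranslates_of_mem_greenClass hx)
  constructor
  · rw [← image_mul_right_leftTranslates, hx.1, image_mul_right_leftTranslates]
  · rw [rightTranslates_mul_right_eq hb hd hxdb, hx.2, rightTranslates_mul_right_eq hb hd h]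

theorem mapsTo_mul_left_greenClass (ha : a ∈ N) (hc : c ∈ N) (h : a * (c * m) = m) :
    MapsTo (fun x => c * x) (greenClass N m) (greenClass N (c * m)) := by
  intro x hx
  have hacx : a * (c * x) = x :=
    mul_mul_eq_self_of_mem_rightTranslates h (mem_rightTranslates_of_mem_greenClass hx)
  constructor
  · rw [leftTranslates_mul_left_eq ha hc hacx, hx.1, leftTranslates_mul_left_eq ha hc h]
  · rw [← image_mul_left_rightTranslates, hx.2, image_mul_left_rightTranslates]

theorem bijOn_mul_right_greenClass (hb : b ∈ N) (hd : d ∈ N) (h : m * d * b = m) :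
    BijOn (fun x => x * d) (greenClass N m) (greenClass N (m * d)) := by
  have h_symm : m * d * b * d = m * d := by rw [h]
  have hinv : InvOn (fun x => x * b) (fun x => x * d) (greenClass N m) (greenClass N (m * d)) :=
    ⟨fun _ hx => mul_mul_eq_self_of_mem_leftTranslates h
        (mem_leftTranslates_of_mem_greenClass hx),
      fun _ hx => mul_mul_eq_self_of_mem_leftTranslates h_symm
        (mem_leftTranslates_of_mem_greenClass hx)⟩
  refine hinv.bijOn (mapsTo_mul_right_greenClass hb hd h) ?_
  simpa only [h] using mapsTo_mul_right_greenClass hd hb h_symm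

theorem bijOn_mul_left_greenClass (ha : a ∈ N) (hc : c ∈ N) (h : a * (c * m) = m) :
    BijOn (fun x => c * x) (greenClass N m) (greenClass N (c * m)) := by
  have h_symm : c * (a * (c * m)) = c * m := by rw [h]
  have hinv : InvOn (fun x => a * x) (fun x => c * x) (greenClass N m) (greenClass N (c * m)) :=
    ⟨fun _ hx => mul_mul_eq_self_of_mem_rightTranslates h
        (mem_rightTranslates_of_mem_greenClass hx),
      fun _ hx => mul_mul_eq_self_of_mem_rightTranslates h_symm
        (mem_rightTranslates_of_mem_greenClass hx)⟩
  refine hinv.bijOn (mapsTo_mul_left_greenClass ha hc h) ?_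
  simpa only [h] using mapsTo_mul_left_greenClass hc ha h_symm

end GreenClass

theorem exists_cancelling_factors_of_twoSidedTranslates_eq {M : Type*} [Monoid M]
    {N : Submonoid M} (hN : ∀ n ∈ N, ¬ Injective fun k : ℕ => n ^ k) {m1 m2 : M}
    (h : twoSidedTranslates N m1 = twoSidedTranslates N m2) :
    ∃ a ∈ N, ∃ b ∈ N, ∃ c ∈ N, ∃ d ∈ N,
      m2 = c * m1 * d ∧ a * (c * m1) = m1 ∧ m1 * d * b = m1 := by
  obtain ⟨a, ha, b, hb, hm1⟩ : m1 ∈ twoSidedTranslates N m2 := h ▸ mem_twoSidedTranslates_self N m1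
  obtain ⟨c, hc, d, hd, hm2⟩ : m2 ∈ twoSidedTranslates N m1 := h ▸ mem_twoSidedTranslates_self N m2
  have hac : a * c ∈ N := N.mul_mem ha hc
  have hdb : d * b ∈ N := N.mul_mem hd hb
  have hfix : a * c * m1 * (d * b) = m1 := by
    calc a * c * m1 * (d * b) = a * (c * m1 * d) * b := by simp only [mul_assoc]
      _ = m1 := by rw [← hm2, ← hm1]
  obtain ⟨k, hk⟩ := exists_pow_succ_mul_eq_self (hN _ hac) hfix
  obtain ⟨l, hl⟩ := exists_mul_pow_succ_eq_self (hN _ hdb) hfix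
  refine ⟨(a * c) ^ k * a, N.mul_mem (N.pow_mem hac k) ha, b * (d * b) ^ l,
    N.mul_mem hb (N.pow_mem hdb l), c, hc, d, hd, hm2, ?_, ?_⟩
  · simpa only [pow_succ, mul_assoc] using hk
  · simpa only [pow_succ', mul_assoc] using hl

theorem stmt6_general {M : Type*} [Monoid M] (N : Submonoid M)
    (hN : ∀ n ∈ N, ¬ Injective fun k : ℕ => n ^ k) (m1 m2 : M)
    (h : twoSidedTranslates N m1 = twoSidedTranslates N m2) :
    ∃ n ∈ N, ∃ n' ∈ N,
      BijOn (fun x => x * n) (leftTranslates N m1) (leftTranslates N m2) ∧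
      BijOn (fun x => n' * x) (rightTranslates N m1) (rightTranslates N m2) ∧
      BijOn (fun x => n' * (x * n)) (greenClass N m1) (greenClass N m2) := by
  obtain ⟨a, ha, b, hb, c, hc, d, hd, rfl, hac, hdb⟩ :=
    exists_cancelling_factors_of_twoSidedTranslates_eq hN h
  have hac_d : a * (c * (m1 * d)) = m1 * d := by rw [← mul_assoc c, ← mul_assoc a, hac]
  have hc_db : c * m1 * d * b = c * m1 := by rw [mul_assoc c, mul_assoc c, hdb]
  refine ⟨d, hd, c, hc, ?_, ?_, ?_⟩
  · rw [mul_assoc, leftTranslates_mul_left_eq ha hc hac_d]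
    exact bijOn_mul_right_leftTranslates hdb
  · rw [rightTranslates_mul_right_eq hb hd hc_db]
    exact bijOn_mul_left_rightTranslates hac
  · rw [mul_assoc]
    exact (bijOn_mul_left_greenClass ha hc hac_d).comp (bijOn_mul_right_greenClass hb hd hdb)

/-- Let `M` be a finite monoid, `N` a submonoid, and `m₁, m₂ ∈ M` with `Nm₁N = Nm₂N`.  Then:
(a) right multiplication by some `n ∈ N` is a bijection from `Nm₁` onto `Nm₂`;
(b) left multiplication by some `n' ∈ N` is a bijection from `m₁N` onto `m₂N`;
(c) the sets `G(m₁) = {x : Nx = Nm₁ ∧ xN = m₁N}` and `G(m₂)` have the same cardinality. -/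
theorem stmt6 {M : Type*} [Monoid M] [Finite M] (N : Submonoid M) (m1 m2 : M)
    (h : {x : M | ∃ a ∈ N, ∃ b ∈ N, x = a * m1 * b} =
         {x : M | ∃ a ∈ N, ∃ b ∈ N, x = a * m2 * b}) :
    (∃ n ∈ N, Set.BijOn (fun x => x * n)
        {x : M | ∃ a ∈ N, x = a * m1} {x : M | ∃ a ∈ N, x = a * m2}) ∧
    (∃ n' ∈ N, Set.BijOn (fun x => n' * x)
        {x : M | ∃ b ∈ N, x = m1 * b} {x : M | ∃ b ∈ N, x = m2 * b}) ∧
    ({x : M | {y : M | ∃ a ∈ N, y = a * x} = {y : M | ∃ a ∈ N, y = a * m1} ∧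
          {y : M | ∃ b ∈ N, y = x * b} = {y : M | ∃ b ∈ N, y = m1 * b}}.ncard =
      {x : M | {y : M | ∃ a ∈ N, y = a * x} = {y : M | ∃ a ∈ N, y = a * m2} ∧
          {y : M | ∃ b ∈ N, y = x * b} = {y : M | ∃ b ∈ N, y = m2 * b}}.ncard) := by
  obtain ⟨n, hn, n', hn', hleft, hright, hgreen⟩ :=
    stmt6_general N (fun n _ => not_injective_infinite_finite fun k : ℕ => n ^ k) m1 m2 h
  exact ⟨⟨n, hn, hleft⟩, ⟨n', hn', hright⟩, hgreen.ncard_eq⟩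
end

section
/- Let M be a finite monoid, let N and K be submonoids of M containing the identity, and let m ∈ M. Then for every m' ∈ M, Nm'K = NmK if and only if there exist n ∈ N and k ∈ K such that m' = n*m*k, N(nm) = Nm, and (mk)K = mK. -/
/-!
The monoids `N` and `K` act on `M` by commuting maps `x ↦ n * x` and `x ↦ x * k`.
If `x` and `y = s • t • x` generate each other, say `x = a • b • y`, then the commuting maps `a * s`
and `b * t` undo each other at `x`. A point whose orbit under one of two such maps repeats is
periodic under both, so that `(a * s) ^ d • x = x` and `(b * t) ^ d • x = x` for some `d > 0`;
hence `s` and `t` can be undone at `x` separately.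
-/

open Function MulAction

theorem mem_periodicPts_of_not_injective_iterate {X : Type*} {f g : X → X} {x : X}
    (hcomm : Function.Commute f g) (hfix : IsFixedPt (f ∘ g) x)
    (hrepeat : ¬ Injective fun i : ℕ ↦ f^[i] x) : x ∈ periodicPts f := by
  obtain ⟨p, q, hpq, hne⟩ := not_injective_iff.mp hrepeat
  wlog hlt : p < q generalizing p q
  · exact this q p hpq.symm hne.symm (by lia)
  have hcancel : g^[p] (f^[p] x) = x := by
    rw [← hcomm.iterate_iterate p p x, ← comp_apply (f := f^[p]), ← hcomm.comp_iterate]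
    exact hfix.iterate p
  refine mk_mem_periodicPts (Nat.sub_pos_of_lt hlt) ?_
  calc f^[q - p] x = f^[q - p] (g^[p] (f^[p] x)) := by rw [hcancel]
    _ = g^[p] (f^[q - p] (f^[p] x)) := hcomm.iterate_iterate _ _ _
    _ = g^[p] (f^[q] x) := by rw [← iterate_add_apply, Nat.sub_add_cancel hlt.le]
    _ = x := by rw [← hpq, hcancel]

theorem mem_periodicPts_right_of_left {X : Type*} {f g : X → X} {x : X}
    (hcomm : Function.Commute f g) (hfix : IsFixedPt (f ∘ g) x) (hf : x ∈ periodicPts f) :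
    x ∈ periodicPts g := by
  obtain ⟨d, hd, hper⟩ := hf
  rw [hcomm.comp_eq] at hfix
  exact ⟨d, hd, (hfix.isPeriodicPt d).left_of_comp hcomm.symm hper⟩

section MonoidAction

variable {S X : Type*} [Monoid S] [MulAction S X]

theorem orbit_smul_eq_orbit_iff {s : S} {x : X} :
    orbit S (s • x) = orbit S x ↔ x ∈ orbit S (s • x) := by
  refine ⟨fun h ↦ h ▸ mem_orbit_self x, ?_⟩
  rintro ⟨a, ha : a • s • x = x⟩
  refine (orbit_smul_subset s x).antisymm ?_
  simpa only [ha] using orbit_smul_subset a (s • x)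

theorem mem_orbit_smul_of_mem_periodicPts {a s : S} {x : X}
    (h : x ∈ periodicPts ((a * s) • · : X → X)) : x ∈ orbit S (s • x) := by
  obtain ⟨d, hd, hper⟩ := h
  obtain ⟨e, rfl⟩ := Nat.exists_eq_add_one.mpr hd
  refine ⟨(a * s) ^ e * a, ?_⟩
  simpa only [smul_smul, pow_succ, mul_assoc] using isPeriodicPt_smul_iff.mp hper

end MonoidAction

/-- The orbit of `x` under the actions of `S` and `T` together. For submonoids `N` and `K` of a
monoid, with `N` acting on the left and `K.op` on the right, this is the set `NxK`. -/
def biorbit (S T : Type*) {X : Type*} [SMul S X] [SMul T X] (x : X) : Set X :=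
  {y | ∃ (s : S) (t : T), y = s • t • x}

section CommutingActions

variable {S T X : Type*} [Monoid S] [Monoid T] [MulAction S X] [MulAction T X]

theorem mem_biorbit_self (x : X) : x ∈ biorbit S T x :=
  ⟨1, 1, by simp only [one_smul]⟩

variable [SMulCommClass S T X]

theorem smul_smul_smul_smul_eq_mul_smul_mul_smul (a s : S) (b t : T) (x : X) :
    a • b • s • t • x = (a * s) • (b * t) • x := by
  rw [← smul_comm s b, smul_smul, smul_smul]

theorem biorbit_subset_of_mem {x y : X} (h : y ∈ biorbit S T x) :
    biorbit S T y ⊆ biorbit S T x := by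
  obtain ⟨s, t, rfl⟩ := h
  rintro _ ⟨a, b, rfl⟩
  exact ⟨a * s, b * t, smul_smul_smul_smul_eq_mul_smul_mul_smul a s b t x⟩

theorem biorbit_eq_biorbit_iff {x y : X} :
    biorbit S T y = biorbit S T x ↔ y ∈ biorbit S T x ∧ x ∈ biorbit S T y :=
  ⟨fun h ↦ ⟨h ▸ mem_biorbit_self y, h ▸ mem_biorbit_self x⟩,
    fun h ↦ (biorbit_subset_of_mem h.1).antisymm (biorbit_subset_of_mem h.2)⟩

theorem mem_periodicPts_smul_of_smul_smul_eq {s : S} {t : T} {x : X} (hfix : s • t • x = x)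
    (hrepeat : (¬ Injective fun i : ℕ ↦ s ^ i • x) ∨ ¬ Injective fun i : ℕ ↦ t ^ i • x) :
    x ∈ periodicPts (s • · : X → X) ∧ x ∈ periodicPts (t • · : X → X) := by
  have hcomm : Function.Commute (s • · : X → X) (t • ·) := smul_comm s t
  have hfix' : IsFixedPt ((t • ·) ∘ (s • ·)) x := (smul_comm s t x).symm.trans hfix
  simp only [← smul_iterate_apply] at hrepeat
  rcases hrepeat with hs | ht
  · have hper := mem_periodicPts_of_not_injective_iterate hcomm hfix hs
    exact ⟨hper, mem_periodicPts_right_of_left hcomm hfix hper⟩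
  · have hper := mem_periodicPts_of_not_injective_iterate hcomm.symm hfix' ht
    exact ⟨mem_periodicPts_right_of_left hcomm.symm hfix' hper, hper⟩

theorem mem_biorbit_smul_smul_iff {s : S} {t : T} {x : X}
    (hrepeat : (∀ s : S, ¬ Injective fun i : ℕ ↦ s ^ i • x) ∨
      ∀ t : T, ¬ Injective fun i : ℕ ↦ t ^ i • x) :
    x ∈ biorbit S T (s • t • x) ↔ x ∈ orbit S (s • x) ∧ x ∈ orbit T (t • x) := by
  constructor
  · rintro ⟨a, b, hx⟩
    rw [smul_smul_smul_smul_eq_mul_smul_mul_smul] at hx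
    exact (mem_periodicPts_smul_of_smul_smul_eq hx.symm (hrepeat.imp (· _) (· _))).imp
      mem_orbit_smul_of_mem_periodicPts mem_orbit_smul_of_mem_periodicPts
  · rintro ⟨⟨a, ha : a • s • x = x⟩, ⟨b, hb : b • t • x = x⟩⟩
    refine ⟨a, b, ?_⟩
    rw [smul_smul_smul_smul_eq_mul_smul_mul_smul, mul_smul b, hb, mul_smul, ha]

theorem stmt9_general {x y : X}
    (hrepeat : (∀ s : S, ¬ Injective fun i : ℕ ↦ s ^ i • x) ∨
      ∀ t : T, ¬ Injective fun i : ℕ ↦ t ^ i • x) :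
    biorbit S T y = biorbit S T x ↔
      ∃ (s : S) (t : T), y = s • t • x ∧
        orbit S (s • x) = orbit S x ∧ orbit T (t • x) = orbit T x := by
  simp only [biorbit_eq_biorbit_iff, orbit_smul_eq_orbit_iff]
  constructor
  · rintro ⟨⟨s, t, rfl⟩, hx⟩
    exact ⟨s, t, rfl, (mem_biorbit_smul_smul_iff hrepeat).mp hx⟩
  · rintro ⟨s, t, rfl, hx⟩
    exact ⟨⟨s, t, rfl⟩, (mem_biorbit_smul_smul_iff hrepeat).mpr hx⟩

end CommutingActions

section Submonoids

variable {M : Type*} [Monoid M] (N K : Submonoid M) (m : M)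

theorem orbit_submonoid_eq_setOf : orbit N m = {x : M | ∃ a ∈ N, x = a * m} := by
  ext x
  simp [mem_orbit_iff, Submonoid.smul_def, eq_comm]

theorem orbit_submonoid_op_eq_setOf : orbit K.op m = {x : M | ∃ b ∈ K, x = m * b} := by
  ext x
  simp [mem_orbit_iff, Submonoid.smul_def, MulOpposite.exists, eq_comm]

theorem biorbit_submonoid_op_eq_setOf :
    biorbit N K.op m = {x : M | ∃ a ∈ N, ∃ b ∈ K, x = a * m * b} := by
  ext x
  simp [biorbit, Submonoid.smul_def, MulOpposite.exists, mul_assoc]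

end Submonoids

/-- Let `M` be a finite monoid, `N, K` submonoids, and `m ∈ M`.  For every `m' ∈ M`,
`Nm'K = NmK` iff there are `n ∈ N`, `k ∈ K` with `m' = n*m*k`, `N(nm) = Nm` and `(mk)K = mK`. -/
theorem stmt9 {M : Type*} [Monoid M] [Finite M] (N K : Submonoid M) (m m' : M) :
    {x : M | ∃ a ∈ N, ∃ b ∈ K, x = a * m' * b} =
      {x : M | ∃ a ∈ N, ∃ b ∈ K, x = a * m * b} ↔
    ∃ n ∈ N, ∃ k ∈ K, m' = n * m * k ∧
      {x : M | ∃ a ∈ N, x = a * (n * m)} = {x : M | ∃ a ∈ N, x = a * m} ∧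
      {x : M | ∃ b ∈ K, x = (m * k) * b} = {x : M | ∃ b ∈ K, x = m * b} := by
  simp only [← biorbit_submonoid_op_eq_setOf, ← orbit_submonoid_eq_setOf,
    ← orbit_submonoid_op_eq_setOf]
  rw [stmt9_general (.inl fun _ ↦ not_injective_infinite_finite _)]
  simp only [Subtype.exists, MulOpposite.exists, Submonoid.mem_op, MulOpposite.unop_op, exists_prop,
    Submonoid.mk_smul, op_smul_eq_mul, smul_eq_mul, mul_assoc]
end
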